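/- arXiv:1206.1531 — 2 statements merged into one kernel-verified Lean document; each statement's English description precedes it below -/
import Mathlib

section
/- Suppose P_n ≥ 2·K_n. Then: (a) p_s = K_n²/P_n ± O(K_n⁴/P_n²), i.e., |p_s − K_n²/P_n| = O(K_n⁴/P_n²); (b) p_s ≤ K_n²/(P_n − K_n); (c) p_s = o(1) if and only if K_n²/P_n = o(1); (d) if p_s = o(1) (equivalently K_n²/P_n = o(1)), then |K_n²/P_n − p_s| = O(p_s²). -/
open MeasureTheory Filter Asymptotics
open scoped ENNReal

noncomputable section

/-- Key rings: `K`-element subsets of a key pool of size `P`. -/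
abbrev KeyRing (P K : ℕ) : Type := {s : Finset (Fin P) // s.card = K}

instance (P K : ℕ) : MeasurableSpace (KeyRing P K) := ⊤

/-- The uniform probability measure on key rings. -/
def uniformKeyMeasure (P K : ℕ) : Measure (KeyRing P K) :=
  (Fintype.card (KeyRing P K) : ℝ≥0∞)⁻¹ • (Measure.count : Measure (KeyRing P K))

/-- The Bernoulli measure with parameter `p` on `Bool`. -/
def bern (p : ℝ) : Measure Bool :=
  ENNReal.ofReal p • Measure.dirac true + ENNReal.ofReal (1 - p) • Measure.dirac false

/-- Sample space underlying `𝔾_on(n, K, P, p)`: independent key rings for the `n`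
nodes together with independent on/off channel states for each pair of nodes. -/
abbrev GonSpace (n K P : ℕ) : Type :=
  (Fin n → KeyRing P K) × (Sym2 (Fin n) → Bool)

/-- The probability measure of the model `𝔾_on(n, K, P, p)`: the key rings of the
`n` nodes are independent and uniform, and the channels are independent
Bernoulli(`p`) variables, independent of the key rings. -/
def gonMeasure (n K P : ℕ) (p : ℝ) : Measure (GonSpace n K P) :=
  (Measure.pi fun _ : Fin n => uniformKeyMeasure P K).prod
    (Measure.pi fun _ : Sym2 (Fin n) => bern p)

/-- The random graph `𝔾_on`: an edge is present iff the key rings intersect and the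
channel between the two nodes is on. -/
def gonGraph {n K P : ℕ} (ω : GonSpace n K P) : SimpleGraph (Fin n) where
  Adj i j := i ≠ j ∧ ((ω.1 i).1 ∩ (ω.1 j).1).Nonempty ∧ ω.2 s(i, j) = true
  symm := by
    refine ⟨?_⟩
    rintro i j ⟨h1, h2, h3⟩
    exact ⟨h1.symm, by rwa [Finset.inter_comm], by rwa [Sym2.eq_swap]⟩
  loopless := ⟨fun i h => h.1 rfl⟩

/-- The random key graph `G(n, K, P)`: an edge is present iff the key rings intersect. -/
def rkgGraph {n K P : ℕ} (ω : Fin n → KeyRing P K) : SimpleGraph (Fin n) where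
  Adj i j := i ≠ j ∧ ((ω i).1 ∩ (ω j).1).Nonempty
  symm := by
    refine ⟨?_⟩
    rintro i j ⟨h1, h2⟩
    exact ⟨h1.symm, by rwa [Finset.inter_comm]⟩
  loopless := ⟨fun i h => h.1 rfl⟩

/-- The probability measure of the random key graph model. -/
def rkgMeasure (n K P : ℕ) : Measure (Fin n → KeyRing P K) :=
  Measure.pi fun _ : Fin n => uniformKeyMeasure P K

/-- Degree of a vertex. -/
def gDeg {V : Type*} (G : SimpleGraph V) (v : V) : ℕ := Nat.card {w // G.Adj v w}

/-- Minimum vertex degree. -/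
def minDeg {V : Type*} (G : SimpleGraph V) : ℕ := sInf (Set.range (gDeg G))

/-- A graph is `k`-connected if it remains connected after the removal of any
`k - 1` of its vertices. -/
def KConnected {V : Type*} (G : SimpleGraph V) (k : ℕ) : Prop :=
  ∀ S : Finset V, S.card ≤ k - 1 → (G.induce ((S : Set V)ᶜ)).Connected

/-- Vertex connectivity: the least number of vertices whose deletion disconnects
the graph. -/
def vertexConn {V : Type*} (G : SimpleGraph V) : ℕ :=
  sInf {m | ∃ S : Finset V, S.card = m ∧ ¬ (G.induce ((S : Set V)ᶜ)).Connected}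

/-- `p_s`: the probability that two key rings share at least one key. -/
def psf (K P : ℕ) : ℝ :=
  if 2 * K ≤ P then 1 - (Nat.choose (P - K) K : ℝ) / (Nat.choose P K : ℝ) else 1

/-- `p_e = p · p_s`: the probability of an edge in `𝔾_on`. -/
def pef (K P : ℕ) (p : ℝ) : ℝ := p * psf K P

/-- The event `D_{x,ℓ}` that the node with index `x` has degree exactly `ℓ`. -/
def degEvent (n K P : ℕ) (x ℓ : ℕ) : Set (GonSpace n K P) :=
  {ω | ∃ hx : x < n, gDeg (gonGraph ω) ⟨x, hx⟩ = ℓ}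

/-- The event `E_{xy}` that the edge between the nodes with indices `x`, `y` is present. -/
def edgeEvent (n K P : ℕ) (x y : ℕ) : Set (GonSpace n K P) :=
  {ω | ∃ (hx : x < n) (hy : y < n), (gonGraph ω).Adj ⟨x, hx⟩ ⟨y, hy⟩}

/-- The event that the key rings of nodes `x` and `y` share exactly `u` keys. -/
def interCardEvent (n K P : ℕ) (x y u : ℕ) : Set (GonSpace n K P) :=
  {ω | ∃ (hx : x < n) (hy : y < n), ((ω.1 ⟨x, hx⟩).1 ∩ (ω.1 ⟨y, hy⟩).1).card = u}

/-- The event `K_{xy}` that the key rings of nodes `x` and `y` share at least one key. -/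
def keyShareEvent (n K P : ℕ) (x y : ℕ) : Set (GonSpace n K P) :=
  {ω | ∃ (hx : x < n) (hy : y < n), ((ω.1 ⟨x, hx⟩).1 ∩ (ω.1 ⟨y, hy⟩).1).Nonempty}

/-- `r_n = min(⌊P/K⌋, ⌊n/2⌋)`. -/
def rn (n K P : ℕ) : ℕ := min (P / K) (n / 2)

/-- The threshold array `J`. -/
def Jarr (n K P : ℕ) (ε lam mu : ℝ) (i : ℕ) : ℕ :=
  if i ≤ rn n K P then max ⌊(1 + ε) * (K : ℝ)⌋₊ ⌊lam * (K : ℝ) * (i : ℝ)⌋₊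
  else ⌊mu * (P : ℝ)⌋₊

/-- The event `𝓔(J)`: some set `T` of at least two nodes has a union of key rings of
size at most `J_{|T|}`. -/
def EJ (n K P : ℕ) (ε lam mu : ℝ) : Set (GonSpace n K P) :=
  {ω | ∃ T : Finset (Fin n), 2 ≤ T.card ∧
    (T.biUnion fun i => (ω.1 i).1).card ≤ Jarr n K P ε lam mu T.card}

/-- The probability that a random `j`-subset of a pool of size `P` avoids a fixed `K`-subset,
computed by drawing one key at a time. -/
lemma choose_div_choose_succ {K P j : ℕ} (hj : j < K) (hKP : 2 * K ≤ P) :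
    (Nat.choose (P - K) (j + 1) : ℝ) / Nat.choose P (j + 1) =
      (Nat.choose (P - K) j : ℝ) / Nat.choose P j * (1 - (K : ℝ) / ((P : ℝ) - j)) := by
  have h1 := Nat.choose_succ_right_eq (P - K) j
  have h2 := Nat.choose_succ_right_eq P j
  rify [show j ≤ P by omega, show j ≤ P - K by omega, show K ≤ P by omega] at h1 h2
  have hc : (0 : ℝ) < Nat.choose P j := by
    exact_mod_cast Nat.choose_pos (show j ≤ P by omega)
  have hc' : (0 : ℝ) < Nat.choose P (j + 1) := by
    exact_mod_cast Nat.choose_pos (show j + 1 ≤ P by omega)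
  have hPj : (0 : ℝ) < (P : ℝ) - j := by
    rw [sub_pos]
    exact_mod_cast (show j < P by omega)
  have hj1 : (0 : ℝ) < (j : ℝ) + 1 := by positivity
  rw [one_sub_div hPj.ne', div_mul_div_comm, div_eq_div_iff hc'.ne' (by positivity), ← h2]
  linear_combination (Nat.choose P (j + 1) : ℝ) * h1

lemma choose_div_choose_le_one (K P j : ℕ) :
    (Nat.choose (P - K) j : ℝ) / Nat.choose P j ≤ 1 :=
  div_le_one_of_le₀ (by exact_mod_cast Nat.choose_le_choose j (Nat.sub_le P K)) (by positivity)

lemma one_sub_le_choose_div_choose {K P j : ℕ} (hj : j ≤ K) (hKP : 2 * K ≤ P) :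
    1 - (j : ℝ) * (K / ((P : ℝ) - K)) ≤ (Nat.choose (P - K) j : ℝ) / Nat.choose P j := by
  induction j with
  | zero => simp
  | succ j ih =>
    rw [choose_div_choose_succ (by omega) hKP]
    have hjK : (j : ℝ) + 1 ≤ K := by exact_mod_cast hj
    have hKP' : 2 * (K : ℝ) ≤ P := by exact_mod_cast hKP
    have hj0 : (0 : ℝ) ≤ j := by positivity
    have hle : (K : ℝ) / ((P : ℝ) - j) ≤ K / ((P : ℝ) - K) := by
      apply div_le_div_of_nonneg_left <;> linarith
    have h0 : (0 : ℝ) ≤ (K : ℝ) / ((P : ℝ) - j) := div_nonneg (by linarith) (by linarith)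
    have h1 := choose_div_choose_le_one K P j
    have ih' := ih (by omega)
    push_cast
    nlinarith [mul_le_mul_of_nonneg_right h1 h0]

lemma choose_div_choose_mul_le_one {K P j : ℕ} (hj : j ≤ K) (hKP : 2 * K ≤ P) :
    (Nat.choose (P - K) j : ℝ) / Nat.choose P j * (1 + j * ((K : ℝ) / P)) ≤ 1 := by
  induction j with
  | zero => simp
  | succ j ih =>
    rw [choose_div_choose_succ (by omega) hKP]
    have hjK : (j : ℝ) + 1 ≤ K := by exact_mod_cast hj
    have hKP' : 2 * (K : ℝ) ≤ P := by exact_mod_cast hKP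
    have hj0 : (0 : ℝ) ≤ j := by positivity
    have hle : (K : ℝ) / P ≤ (K : ℝ) / ((P : ℝ) - j) := by
      apply div_le_div_of_nonneg_left <;> linarith
    have hy : (0 : ℝ) ≤ (K : ℝ) / P := by positivity
    have hr : (0 : ℝ) ≤ (Nat.choose (P - K) j : ℝ) / Nat.choose P j := by positivity
    refine le_trans ?_ (ih (by omega))
    rw [mul_assoc]
    refine mul_le_mul_of_nonneg_left ?_ hr
    push_cast
    generalize (K : ℝ) / P = y at *
    generalize (K : ℝ) / ((P : ℝ) - j) = z at *
    have h2 : 0 ≤ (z - y) * (1 + (j + 1) * y) := mul_nonneg (by linarith) (by positivity)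
    have h3 : 0 ≤ (j + 1) * y * y := by positivity
    linarith

lemma psf_nonneg {K P : ℕ} (hKP : 2 * K ≤ P) : 0 ≤ psf K P := by
  rw [psf, if_pos hKP, sub_nonneg]
  exact choose_div_choose_le_one K P K

lemma psf_le_sq_div_sub {K P : ℕ} (hKP : 2 * K ≤ P) :
    psf K P ≤ (K : ℝ) ^ 2 / ((P : ℝ) - K) := by
  have h := one_sub_le_choose_div_choose le_rfl hKP
  rw [psf, if_pos hKP, sq, mul_div_assoc]
  linarith

lemma sq_div_mul_one_sub_psf_le {K P : ℕ} (hKP : 2 * K ≤ P) :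
    (K : ℝ) ^ 2 / P * (1 - psf K P) ≤ psf K P := by
  have h := choose_div_choose_mul_le_one le_rfl hKP
  rw [psf, if_pos hKP, sq, mul_div_assoc]
  linarith

lemma sq_div_sub_le {K P : ℕ} (hKP : 2 * K ≤ P) :
    (K : ℝ) ^ 2 / ((P : ℝ) - K) ≤ (K : ℝ) ^ 2 / P + 2 * ((K : ℝ) ^ 2 / P) ^ 2 := by
  rcases K.eq_zero_or_pos with rfl | hK
  · simp
  have hK1 : (1 : ℝ) ≤ K := by exact_mod_cast hK
  have hKP' : 2 * (K : ℝ) ≤ P := by exact_mod_cast hKP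
  have hP : (0 : ℝ) < P := by linarith
  rw [div_le_iff₀ (by linarith)]
  have key : ((K : ℝ) ^ 2 / P + 2 * ((K : ℝ) ^ 2 / P) ^ 2) * (P - K) - (K : ℝ) ^ 2
      = (K : ℝ) ^ 3 / P ^ 2 * (2 * K * (P - K) - P) := by
    field_simp
    ring
  have : 0 ≤ (K : ℝ) ^ 3 / P ^ 2 * (2 * K * (P - K) - P) :=
    mul_nonneg (by positivity) (by nlinarith)
  linarith

lemma psf_le_two_mul {K P : ℕ} (hKP : 2 * K ≤ P) : psf K P ≤ 2 * ((K : ℝ) ^ 2 / P) := by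
  rcases K.eq_zero_or_pos with rfl | hK
  · simp [psf]
  have hK1 : (1 : ℝ) ≤ K := by exact_mod_cast hK
  have hKP' : 2 * (K : ℝ) ≤ P := by exact_mod_cast hKP
  refine (psf_le_sq_div_sub hKP).trans ?_
  rw [← mul_div_assoc, div_le_div_iff₀ (by linarith) (by linarith)]
  nlinarith [sq_nonneg (K : ℝ)]

lemma abs_psf_sub_le {K P : ℕ} (hKP : 2 * K ≤ P) :
    |psf K P - (K : ℝ) ^ 2 / P| ≤ 2 * ((K : ℝ) ^ 2 / P) ^ 2 := by
  have h1 := (psf_le_sq_div_sub hKP).trans (sq_div_sub_le hKP)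
  have h2 := sq_div_mul_one_sub_psf_le hKP
  have h3 := psf_le_two_mul hKP
  have hx : 0 ≤ (K : ℝ) ^ 2 / P := by positivity
  rw [abs_le]
  constructor <;> nlinarith

lemma sq_div_le_two_mul_psf {K P : ℕ} (hKP : 2 * K ≤ P) (h : psf K P ≤ 1 / 2) :
    (K : ℝ) ^ 2 / P ≤ 2 * psf K P := by
  have h2 := sq_div_mul_one_sub_psf_le hKP
  have hx : 0 ≤ (K : ℝ) ^ 2 / P := by positivity
  nlinarith

/-- estimates for `p_s` in terms of `K²/P`. -/
theorem psf_estimates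
    (K P : ℕ → ℕ) (hKP : ∀ n, 2 * K n ≤ P n) :
    -- (a)
    ((fun n : ℕ => psf (K n) (P n) - (K n : ℝ) ^ 2 / (P n : ℝ)) =O[atTop]
      fun n : ℕ => (K n : ℝ) ^ 4 / (P n : ℝ) ^ 2) ∧
    -- (b)
    (∀ n : ℕ, psf (K n) (P n) ≤ (K n : ℝ) ^ 2 / ((P n : ℝ) - (K n : ℝ))) ∧
    -- (c)
    (Tendsto (fun n : ℕ => psf (K n) (P n)) atTop (nhds 0) ↔
      Tendsto (fun n : ℕ => (K n : ℝ) ^ 2 / (P n : ℝ)) atTop (nhds 0)) ∧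
    -- (d)
    (Tendsto (fun n : ℕ => psf (K n) (P n)) atTop (nhds 0) →
      (fun n : ℕ => (K n : ℝ) ^ 2 / (P n : ℝ) - psf (K n) (P n)) =O[atTop]
        fun n : ℕ => psf (K n) (P n) ^ 2) := by
  have hhalf (h : Tendsto (fun n : ℕ => psf (K n) (P n)) atTop (nhds 0)) :
      ∀ᶠ n in atTop, (K n : ℝ) ^ 2 / (P n : ℝ) ≤ 2 * psf (K n) (P n) := by
    filter_upwards [h.eventually_le_const (show (0 : ℝ) < 1 / 2 by norm_num)] with n hn
    exact sq_div_le_two_mul_psf (hKP n) hn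
  refine ⟨?_, fun n => psf_le_sq_div_sub (hKP n), ⟨fun h => ?_, fun h => ?_⟩, fun h => ?_⟩
  · refine IsBigO.of_bound 2 (Eventually.of_forall fun n => ?_)
    rw [Real.norm_eq_abs, Real.norm_of_nonneg (by positivity)]
    convert abs_psf_sub_le (hKP n) using 2
    ring
  · refine squeeze_zero' (Eventually.of_forall fun n => by positivity) (hhalf h) ?_
    simpa using h.const_mul 2
  · refine squeeze_zero (fun n => psf_nonneg (hKP n)) (fun n => psf_le_two_mul (hKP n)) ?_
    simpa using h.const_mul 2
  · refine IsBigO.of_bound 8 ?_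
    filter_upwards [hhalf h] with n hn
    have hx : 0 ≤ (K n : ℝ) ^ 2 / (P n : ℝ) := by positivity
    rw [Real.norm_eq_abs, Real.norm_of_nonneg (sq_nonneg _), abs_sub_comm]
    refine (abs_psf_sub_le (hKP n)).trans ?_
    nlinarith [pow_le_pow_left₀ hx hn 2]
end
end

section
/- Let S_x and S_y be two independent key rings, each uniformly distributed over the K_n-element subsets of a key pool of size P_n, and suppose P_n ≥ 2·K_n. Then for every integer u with 0 ≤ u ≤ K_n: P[|S_x ∩ S_y| = u] ≤ (1/u!)·(K_n²/(P_n − K_n))^u. -/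
open MeasureTheory Filter Asymptotics
open scoped ENNReal

noncomputable section

theorem Nat.descFactorial_mul_pow_le {K P : ℕ} (h : K ≤ P) (u : ℕ) :
    K.descFactorial u * P ^ u ≤ P.descFactorial u * K ^ u := by
  induction u with
  | zero => simp
  | succ u ih =>
    rw [Nat.descFactorial_succ, Nat.descFactorial_succ, pow_succ, pow_succ]
    have hstep : (K - u) * P ≤ (P - u) * K := by
      rw [Nat.sub_mul, Nat.sub_mul, Nat.mul_comm K P]
      exact Nat.sub_le_sub_left (Nat.mul_le_mul_left u h) _
    calc (K - u) * K.descFactorial u * (P ^ u * P)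
        = ((K - u) * P) * (K.descFactorial u * P ^ u) := by ring
      _ ≤ ((P - u) * K) * (P.descFactorial u * K ^ u) := Nat.mul_le_mul hstep ih
      _ = (P - u) * P.descFactorial u * (K ^ u * K) := by ring

/-- Upper bound on the number of `K`-subsets meeting a given `K`-subset in exactly `u` points. -/
theorem card_keyRing_inter_le {P K : ℕ} (u : ℕ) (s : KeyRing P K) :
    (Finset.univ.filter fun t : KeyRing P K => (s.1 ∩ t.1).card = u).card ≤
      K.choose u * (P - K).choose (K - u) := by
  have hcard : (s.1.powersetCard u ×ˢ (s.1ᶜ).powersetCard (K - u)).card =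
      K.choose u * (P - K).choose (K - u) := by
    rw [Finset.card_product, Finset.card_powersetCard, Finset.card_powersetCard,
      Finset.card_compl, s.2, Fintype.card_fin]
  rw [← hcard]
  refine Finset.card_le_card_of_injOn (fun t => (s.1 ∩ t.1, t.1 \ s.1)) ?_ ?_
  · intro t ht
    have ht' : (s.1 ∩ t.1).card = u := by simpa using ht
    have hsd : (t.1 \ s.1).card = K - u := by
      rw [Finset.card_sdiff, t.2, ht']
    simp only [Finset.coe_product, Set.mem_prod, Finset.mem_coe, Finset.mem_powersetCard]
    refine ⟨⟨Finset.inter_subset_left, ht'⟩, fun a ha => ?_, hsd⟩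
    simpa using (Finset.mem_sdiff.1 ha).2
  · intro t _ t' _ h
    simp only [Prod.mk.injEq] at h
    apply Subtype.ext
    rw [← Finset.sdiff_union_inter t.1 s.1, ← Finset.sdiff_union_inter t'.1 s.1, h.2,
      Finset.inter_comm t.1, Finset.inter_comm t'.1, h.1]

theorem choose_mul_choose_div_le {K P u : ℕ} (h2 : 2 * K ≤ P) (hu : u ≤ K) :
    ((K.choose u * (P - K).choose (K - u) : ℕ) : ℝ) / (P.choose K : ℝ) ≤
      (1 / (u.factorial : ℝ)) * ((K : ℝ) ^ 2 / ((P : ℝ) - (K : ℝ))) ^ u := by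
  have hKP : K ≤ P := by omega
  rcases Nat.eq_zero_or_pos K with rfl | hK
  · obtain rfl : u = 0 := by omega
    simp
  have hPK : (0 : ℝ) < (P : ℝ) - K := by
    have : (K : ℝ) < P := by exact_mod_cast (by omega : K < P)
    linarith
  have hP : (0 : ℝ) < P := by exact_mod_cast (by omega : 0 < P)
  have hK' : (0 : ℝ) < K := by exact_mod_cast hK
  have hPu : (0 : ℝ) < P.choose u := by exact_mod_cast Nat.choose_pos (hu.trans hKP)
  have hPc : (0 : ℝ) < P.choose K := by exact_mod_cast Nat.choose_pos hKP
  have hfac : (0 : ℝ) < u.factorial := by exact_mod_cast u.factorial_pos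
  have hmul : (P.choose K : ℝ) * K.choose u = P.choose u * (P - u).choose (K - u) := by
    exact_mod_cast Nat.choose_mul (n := P) (k := K) (s := u) hu
  have hmono : ((P - K).choose (K - u) : ℝ) ≤ (P - u).choose (K - u) := by
    exact_mod_cast Nat.choose_le_choose _ (by omega)
  have hratio : ((P - K).choose (K - u) : ℝ) / P.choose K ≤ (K : ℝ) ^ u / (P : ℝ) ^ u := by
    have hdesc : (K.choose u : ℝ) * (P : ℝ) ^ u ≤ P.choose u * (K : ℝ) ^ u := by
      have := Nat.descFactorial_mul_pow_le hKP u
      rw [Nat.descFactorial_eq_factorial_mul_choose, Nat.descFactorial_eq_factorial_mul_choose,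
        mul_assoc, mul_assoc] at this
      exact_mod_cast Nat.le_of_mul_le_mul_left this u.factorial_pos
    rw [div_le_div_iff₀ hPc (by positivity)]
    refine le_of_mul_le_mul_left ?_ hPu
    calc (P.choose u : ℝ) * ((P - K).choose (K - u) * (P : ℝ) ^ u)
        ≤ P.choose u * ((P - u).choose (K - u) * (P : ℝ) ^ u) := by gcongr
      _ = P.choose K * (K.choose u * (P : ℝ) ^ u) := by
          rw [← mul_assoc, ← hmul, mul_assoc]
      _ ≤ P.choose K * (P.choose u * (K : ℝ) ^ u) := by gcongr
      _ = P.choose u * ((K : ℝ) ^ u * P.choose K) := by ring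
  have hchoose : (K.choose u : ℝ) ≤ (K : ℝ) ^ u / u.factorial := Nat.choose_le_pow_div u K
  push_cast
  calc (K.choose u : ℝ) * (P - K).choose (K - u) / P.choose K
      = K.choose u * (((P - K).choose (K - u) : ℝ) / P.choose K) := by ring
    _ ≤ ((K : ℝ) ^ u / u.factorial) * ((K : ℝ) ^ u / (P : ℝ) ^ u) := by gcongr
    _ = (1 / (u.factorial : ℝ)) * ((K : ℝ) ^ 2 / P) ^ u := by
        rw [div_pow, ← pow_mul, mul_comm 2 u, pow_mul, sq]; ring
    _ ≤ _ := by
        gcongr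
        linarith

theorem uniformKeyMeasure_apply {P K : ℕ} (p : KeyRing P K → Prop) [DecidablePred p] :
    uniformKeyMeasure P K {t | p t} =
      (P.choose K : ℝ≥0∞)⁻¹ * ((Finset.univ.filter p).card : ℝ≥0∞) := by
  have hset : {t | p t} = ((Finset.univ.filter p : Finset (KeyRing P K)) : Set (KeyRing P K)) := by
    simp
  have hcount := Measure.count_apply_finset' (s := Finset.univ.filter p)
    (MeasurableSpace.measurableSet_top)
  rw [uniformKeyMeasure, Measure.smul_apply, hset, hcount, Fintype.card_finset_len,
    Fintype.card_fin, smul_eq_mul]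

theorem uniformKeyMeasure_univ_le (P K : ℕ) : uniformKeyMeasure P K Set.univ ≤ 1 := by
  have h := uniformKeyMeasure_apply (P := P) (K := K) fun _ => True
  rw [Set.ofPred_true, Finset.filter_true, Finset.card_univ, Fintype.card_finset_len,
    Fintype.card_fin] at h
  rw [h]
  exact ENNReal.inv_mul_le_one _

/-- bound on the probability that two key rings share exactly
`u` keys. -/
theorem keyring_overlap_bound
    (K P u : ℕ) (h2 : 2 * K ≤ P) (hu : u ≤ K) :
    ((uniformKeyMeasure P K).prod (uniformKeyMeasure P K))
        {s : KeyRing P K × KeyRing P K | (s.1.1 ∩ s.2.1).card = u} ≤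
      ENNReal.ofReal
        ((1 / (u.factorial : ℝ)) * ((K : ℝ) ^ 2 / ((P : ℝ) - (K : ℝ))) ^ u) := by
  have : DiscreteMeasurableSpace (KeyRing P K) := ⟨fun _ => MeasurableSpace.measurableSet_top⟩
  have : IsFiniteMeasure (uniformKeyMeasure P K) :=
    ⟨(uniformKeyMeasure_univ_le P K).trans_lt ENNReal.one_lt_top⟩
  have hpos : (0 : ℝ) < P.choose K := by exact_mod_cast Nat.choose_pos (by omega : K ≤ P)
  rw [Measure.prod_apply MeasurableSet.of_discrete]
  calc _ ≤ ∫⁻ _ : KeyRing P K, ENNReal.ofReal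
        ((1 / (u.factorial : ℝ)) * ((K : ℝ) ^ 2 / ((P : ℝ) - (K : ℝ))) ^ u)
          ∂(uniformKeyMeasure P K) := by
        refine lintegral_mono fun s => ?_
        refine (uniformKeyMeasure_apply fun t : KeyRing P K => (s.1 ∩ t.1).card = u).trans_le ?_
        refine le_trans ?_ (ENNReal.ofReal_le_ofReal (choose_mul_choose_div_le h2 hu))
        rw [ENNReal.ofReal_div_of_pos hpos, ENNReal.ofReal_natCast, ENNReal.ofReal_natCast,
          ENNReal.div_eq_inv_mul]
        gcongr
        exact card_keyRing_inter_le u s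
    _ ≤ _ := by
        rw [lintegral_const]
        exact mul_le_of_le_one_right' (uniformKeyMeasure_univ_le P K)
end
end
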